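/- There exists a constant C > 0 (independent of N and s) such that for all s ∈ ℕ and all N ∈ ℕ with N ≥ 2 one has disc(N,s) ≤ C·√(s/N)·√(log s + log N); equivalently, for every such N and s there exists an N-element point set P in [0,1)^s with D*(P) ≤ C·√(s/N)·√(log s + log N). -/

import Mathlib

/-!
Points drawn independently and uniformly from `[0,1)^s` have small local discrepancy at any one
corner with probability exponentially close to `1`, by Hoeffding's inequality. A union bound extends
this to all `(m + 1)^s` corners of the grid `{0, 1/m, …, 1}^s`, and since `Δ` is a difference of two
functions increasing in `t`, rounding a corner down and up to the grid costs only `s/m`.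
With `m = sN` the union bound succeeds once the deviation is of order `√(s log(sN) / N)`.
-/

open Finset

/-- Local discrepancy of the point set `x` at the corner point `t`:
`Δ(t) = #{n : x_n ∈ [0,t)}/N − ∏_j t_j`. -/
noncomputable def localDisc {N s : ℕ} (x : Fin N → Fin s → ℝ) (t : Fin s → ℝ) : ℝ :=
  ((univ.filter fun n => ∀ j, x n j < t j).card : ℝ) / N - ∏ j, t j

/-- Star-discrepancy `D*(x) = sup_{t ∈ [0,1]^s} |Δ(t)|`. -/
noncomputable def starDisc {N s : ℕ} (x : Fin N → Fin s → ℝ) : ℝ :=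
  sSup {d : ℝ | ∃ t : Fin s → ℝ, (∀ j, t j ∈ Set.Icc (0:ℝ) 1) ∧ d = |localDisc x t|}

/-- `N`-th minimal star-discrepancy `disc(N,s)`, the infimum of `D*` over all
`N`-element point sets in `[0,1)^s`. -/
noncomputable def minDisc (N s : ℕ) : ℝ :=
  sInf {d : ℝ | ∃ x : Fin N → Fin s → ℝ,
    (∀ n j, x n j ∈ Set.Ico (0:ℝ) 1) ∧ d = starDisc x}

/-- Inverse of the star-discrepancy: `N(s,ε) = min {N ≥ 1 : disc(N,s) ≤ ε}`. -/
noncomputable def invDisc (s : ℕ) (ε : ℝ) : ℕ :=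
  sInf {N : ℕ | 1 ≤ N ∧ minDisc N s ≤ ε}

section Concentration

open MeasureTheory ProbabilityTheory
open scoped NNReal

variable {Ω : Type*} [MeasurableSpace Ω] {μ : Measure Ω}

lemma measureReal_le_abs_of_hasSubgaussianMGF {X : Ω → ℝ} {c : ℝ≥0}
    (hX : HasSubgaussianMGF X c μ) {ε : ℝ} (hε : 0 ≤ ε) :
    μ.real {ω | ε ≤ |X ω|} ≤ 2 * Real.exp (-ε ^ 2 / (2 * c)) := by
  have hunion : {ω | ε ≤ |X ω|} = {ω | ε ≤ X ω} ∪ {ω | ε ≤ (-X) ω} := by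
    ext ω
    simp [le_abs]
  calc μ.real {ω | ε ≤ |X ω|}
      ≤ μ.real {ω | ε ≤ X ω} + μ.real {ω | ε ≤ (-X) ω} := hunion ▸ measureReal_union_le _ _
    _ ≤ Real.exp (-ε ^ 2 / (2 * c)) + Real.exp (-ε ^ 2 / (2 * c)) :=
        add_le_add (hX.measure_ge_le hε) (hX.neg.measure_ge_le hε)
    _ = 2 * Real.exp (-ε ^ 2 / (2 * c)) := (two_mul _).symm

variable [IsProbabilityMeasure μ] {ι : Type*} [Fintype ι] {a b : ℝ}

lemma hasSubgaussianMGF_pi_sum_sub_integral {f : Ω → ℝ} (hf : AEMeasurable f μ)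
    (hfab : ∀ᵐ ω ∂μ, f ω ∈ Set.Icc a b) :
    HasSubgaussianMGF (fun x : ι → Ω => ∑ i, (f (x i) - ∫ ω, f ω ∂μ))
      (∑ _i : ι, (‖b - a‖₊ / 2) ^ 2) (Measure.pi fun _ => μ) := by
  refine HasSubgaussianMGF.sum_of_iIndepFun
    (iIndepFun_pi (μ := fun _ : ι => μ) (X := fun _ ω => f ω - ∫ ω, f ω ∂μ)
      fun _ => hf.sub_const _) fun i _ => ?_
  have heval := measurePreserving_eval (fun _ : ι => μ) i
  refine HasSubgaussianMGF.of_map (X := fun ω => f ω - ∫ ω, f ω ∂μ) (Y := fun x : ι → Ω => x i)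
    heval.measurable.aemeasurable ?_
  rw [heval.map_eq]
  exact hasSubgaussianMGF_of_mem_Icc hf hfab

lemma measureReal_pi_le_abs_sum_sub_integral {f : Ω → ℝ} (hf : AEMeasurable f μ)
    (hfab : ∀ᵐ ω ∂μ, f ω ∈ Set.Icc a b) {ε : ℝ} (hε : 0 ≤ ε) :
    (Measure.pi fun _ : ι => μ).real {x | ε ≤ |∑ i, (f (x i) - ∫ ω, f ω ∂μ)|} ≤
      2 * Real.exp (-(2 * ε ^ 2) / (Fintype.card ι * (b - a) ^ 2)) := by
  convert! measureReal_le_abs_of_hasSubgaussianMGF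
    (hasSubgaussianMGF_pi_sum_sub_integral hf hfab) hε using 3
  simp only [sum_const, card_univ, nsmul_eq_mul, NNReal.coe_mul, NNReal.coe_natCast, NNReal.coe_pow,
    NNReal.coe_div, coe_nnnorm, NNReal.coe_ofNat, div_pow, Real.norm_eq_abs, sq_abs]
  rw [← mul_div_mul_left (-ε ^ 2) _ two_ne_zero]
  ring_nf

theorem exists_forall_abs_sum_sub_integral_lt {T : Type*} [Fintype T] {f : T → Ω → ℝ}
    (hf : ∀ t, AEMeasurable (f t) μ) (hfab : ∀ t, ∀ᵐ ω ∂μ, f t ω ∈ Set.Icc a b)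
    {p : Ω → Prop} (hp : ∀ᵐ ω ∂μ, p ω) {ε : ℝ} (hε : 0 ≤ ε)
    (hT : Fintype.card T * (2 * Real.exp (-(2 * ε ^ 2) / (Fintype.card ι * (b - a) ^ 2))) < 1) :
    ∃ x : ι → Ω, (∀ i, p (x i)) ∧ ∀ t, |∑ i, (f t (x i) - ∫ ω, f t ω ∂μ)| < ε := by
  set ν : Measure (ι → Ω) := Measure.pi fun _ => μ
  set bad : Set (ι → Ω) := ⋃ t, {x | ε ≤ |∑ i, (f t (x i) - ∫ ω, f t ω ∂μ)|}
  have hbad : ν.real bad < 1 := by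
    calc ν.real bad
        ≤ ∑ t, ν.real {x | ε ≤ |∑ i, (f t (x i) - ∫ ω, f t ω ∂μ)|} :=
          measureReal_iUnion_fintype_le _
      _ ≤ ∑ _t : T, 2 * Real.exp (-(2 * ε ^ 2) / (Fintype.card ι * (b - a) ^ 2)) :=
          sum_le_sum fun t _ => measureReal_pi_le_abs_sum_sub_integral (hf t) (hfab t) hε
      _ < 1 := by simpa using hT
  have hae : ∀ᵐ x ∂ν, ∀ i, p (x i) :=
    ae_all_iff.2 fun i => (Measure.quasiMeasurePreserving_eval _ i).ae hp
  have hfreq : ∃ᵐ x ∂ν, x ∉ bad := by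
    intro hall
    have hfull : bad =ᵐ[ν] Set.univ := Filter.eventuallyEq_univ.2 (by simpa using hall)
    rw [measureReal_congr hfull, probReal_univ] at hbad
    exact hbad.false
  obtain ⟨x, hx, hxp⟩ := (hfreq.and_eventually hae).exists
  exact ⟨x, hxp, by simpa [bad] using hx⟩

end Concentration

section UniformCube

open MeasureTheory

variable {ι : Type*} [Fintype ι]

/-- The uniform distribution on the half-open unit cube `[0,1)^ι`, as a measure on all of `ℝ^ι`;
this is the law of each random sample point. -/
noncomputable def uniformCube (ι : Type*) [Fintype ι] : Measure (ι → ℝ) :=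
  Measure.pi fun _ => volume.restrict (Set.Ico 0 1)

instance isProbabilityMeasure_uniformCube : IsProbabilityMeasure (uniformCube ι) := by
  have : IsProbabilityMeasure (volume.restrict (Set.Ico (0 : ℝ) 1)) := ⟨by simp⟩
  unfold uniformCube
  infer_instance

lemma ae_uniformCube_mem_Ico : ∀ᵐ x ∂uniformCube ι, ∀ j, x j ∈ Set.Ico (0 : ℝ) 1 :=
  ae_all_iff.2 fun j => (Measure.quasiMeasurePreserving_eval _ j).ae
    (ae_restrict_mem measurableSet_Ico)

lemma uniformCube_real_pi_Iio {t : ι → ℝ} (ht : ∀ j, t j ∈ Set.Icc (0 : ℝ) 1) :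
    (uniformCube ι).real (Set.univ.pi fun j => Set.Iio (t j)) = ∏ j, t j := by
  rw [uniformCube, Measure.real, Measure.pi_pi, ENNReal.toReal_prod]
  refine prod_congr rfl fun j _ => ?_
  have hinter : Set.Iio (t j) ∩ Set.Ico 0 1 = Set.Ico 0 (t j) := by
    ext u
    simp only [Set.mem_inter_iff, Set.mem_Iio, Set.mem_Ico]
    grind
  rw [Measure.restrict_apply measurableSet_Iio, hinter, Real.volume_Ico, sub_zero,
    ENNReal.toReal_ofReal (ht j).1]

end UniformCube

lemma norm_prod_sub_prod_le_sum_norm_sub {ι R : Type*} [NormedCommRing R] [NormOneClass R]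
    {S : Finset ι} {a b : ι → R} (ha : ∀ i ∈ S, ‖a i‖ ≤ 1) (hb : ∀ i ∈ S, ‖b i‖ ≤ 1) :
    ‖∏ i ∈ S, a i - ∏ i ∈ S, b i‖ ≤ ∑ i ∈ S, ‖a i - b i‖ := by
  induction S using Finset.cons_induction with
  | empty => simp
  | cons i S hi ih =>
    simp only [forall_mem_cons] at ha hb
    have hprod : ‖∏ i ∈ S, a i‖ ≤ 1 :=
      (Finset.norm_prod_le S a).trans (prod_le_one (fun _ _ => norm_nonneg _) ha.2)
    rw [prod_cons, prod_cons, sum_cons]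
    calc ‖a i * ∏ i ∈ S, a i - b i * ∏ i ∈ S, b i‖
        = ‖(a i - b i) * ∏ i ∈ S, a i + b i * (∏ i ∈ S, a i - ∏ i ∈ S, b i)‖ := by ring_nf
      _ ≤ ‖a i - b i‖ * ‖∏ i ∈ S, a i‖ + ‖b i‖ * ‖∏ i ∈ S, a i - ∏ i ∈ S, b i‖ :=
          (norm_add_le _ _).trans (add_le_add (norm_mul_le _ _) (norm_mul_le _ _))
      _ ≤ ‖a i - b i‖ + ∑ i ∈ S, ‖a i - b i‖ :=
          add_le_add (mul_le_of_le_one_right (norm_nonneg _) hprod)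
            ((mul_le_of_le_one_left (norm_nonneg _) hb.1).trans (ih ha.2 hb.2))

section Discrepancy

variable {N s : ℕ}

lemma localDisc_eq_sum_div (hN : N ≠ 0) (x : Fin N → Fin s → ℝ) (t : Fin s → ℝ) :
    localDisc x t =
      (∑ n, ((Set.univ.pi fun j => Set.Iio (t j)).indicator 1 (x n) - ∏ j, t j)) / N := by
  classical
  have hN' : (N : ℝ) ≠ 0 := Nat.cast_ne_zero.2 hN
  simp only [localDisc, sum_sub_distrib, Set.indicator_apply, Set.mem_univ_pi, Set.mem_Iio,
    Pi.one_apply, sum_boole, sum_const, card_univ, Fintype.card_fin, nsmul_eq_mul]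
  rw [sub_div, mul_div_cancel_left₀ _ hN']

lemma abs_localDisc_le_add_prod_sub_prod {x : Fin N → Fin s → ℝ} {l t u : Fin s → ℝ} {ε : ℝ}
    (hl : ∀ j, 0 ≤ l j) (hlt : l ≤ t) (htu : t ≤ u)
    (hxl : |localDisc x l| ≤ ε) (hxu : |localDisc x u| ≤ ε) :
    |localDisc x t| ≤ ε + (∏ j, u j - ∏ j, l j) := by
  have hprod_lt : ∏ j, l j ≤ ∏ j, t j := prod_le_prod (fun j _ => hl j) fun j _ => hlt j
  have hprod_tu : ∏ j, t j ≤ ∏ j, u j :=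
    prod_le_prod (fun j _ => (hl j).trans (hlt j)) fun j _ => htu j
  have hcard {c d : Fin s → ℝ} (hcd : c ≤ d) :
      ((univ.filter fun n => ∀ j, x n j < c j).card : ℝ) / N ≤
        ((univ.filter fun n => ∀ j, x n j < d j).card : ℝ) / N := by
    gcongr with n _ j
    exact hcd j
  have hcard_lt := hcard hlt
  have hcard_tu := hcard htu
  rw [localDisc, abs_le] at hxl hxu ⊢
  constructor <;> linarith

/-- The corner `k/m` of the regular grid `{0, 1/m, …, 1}^s` with integer coordinates `k`. -/
noncomputable def gridCorner (m : ℕ) (k : Fin s → Fin (m + 1)) : Fin s → ℝ :=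
  fun j => (k j : ℕ) / (m : ℝ)

variable {m : ℕ}

lemma gridCorner_mem_Icc (k : Fin s → Fin (m + 1)) (j : Fin s) :
    gridCorner m k j ∈ Set.Icc (0 : ℝ) 1 :=
  ⟨by unfold gridCorner; positivity,
    div_le_one_of_le₀ (Nat.cast_le.2 (Fin.is_le _)) (Nat.cast_nonneg _)⟩

lemma exists_gridCorner_le_le (hm : 0 < m) {t : Fin s → ℝ} (ht : ∀ j, t j ∈ Set.Icc (0 : ℝ) 1) :
    ∃ k l : Fin s → Fin (m + 1), gridCorner m k ≤ t ∧ t ≤ gridCorner m l ∧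
      ∀ j, gridCorner m l j - gridCorner m k j ≤ 1 / m := by
  have hm' : (0 : ℝ) < m := Nat.cast_pos.2 hm
  have hmt (j : Fin s) : m * t j ≤ m := mul_le_of_le_one_right hm'.le (ht j).2
  have hceil (j : Fin s) : ⌈m * t j⌉₊ ≤ m := Nat.ceil_le.2 (hmt j)
  refine ⟨fun j => ⟨⌊m * t j⌋₊, Nat.lt_succ_of_le ((Nat.floor_le_ceil _).trans (hceil j))⟩,
    fun j => ⟨⌈m * t j⌉₊, Nat.lt_succ_of_le (hceil j)⟩, fun j => ?_, fun j => ?_, fun j => ?_⟩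
  · rw [gridCorner, div_le_iff₀' hm']
    exact Nat.floor_le (mul_nonneg hm'.le (ht j).1)
  · rw [gridCorner, le_div_iff₀' hm']
    exact Nat.le_ceil _
  · rw [gridCorner, gridCorner, ← sub_div]
    gcongr
    rw [sub_le_iff_le_add']
    exact_mod_cast Nat.ceil_le_floor_add_one _

lemma abs_localDisc_le_of_forall_gridCorner (hm : 0 < m) {x : Fin N → Fin s → ℝ} {ε : ℝ}
    (hx : ∀ k, |localDisc x (gridCorner m k)| ≤ ε)
    {t : Fin s → ℝ} (ht : ∀ j, t j ∈ Set.Icc (0 : ℝ) 1) : |localDisc x t| ≤ ε + s / m := by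
  obtain ⟨k, l, hkt, htl, hlk⟩ := exists_gridCorner_le_le hm ht
  have hnorm (i : Fin s → Fin (m + 1)) (j : Fin s) : ‖gridCorner m i j‖ ≤ 1 := by
    rw [Real.norm_of_nonneg (gridCorner_mem_Icc i j).1]
    exact (gridCorner_mem_Icc i j).2
  have hprod : ∏ j, gridCorner m l j - ∏ j, gridCorner m k j ≤ s / m := by
    calc ∏ j, gridCorner m l j - ∏ j, gridCorner m k j
        ≤ ∑ j, ‖gridCorner m l j - gridCorner m k j‖ :=
          (Real.le_norm_self _).trans
            (norm_prod_sub_prod_le_sum_norm_sub (fun j _ => hnorm l j) fun j _ => hnorm k j)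
      _ ≤ ∑ _j : Fin s, 1 / (m : ℝ) := sum_le_sum fun j _ => by
          rw [Real.norm_of_nonneg (sub_nonneg.2 ((hkt j).trans (htl j)))]
          exact hlk j
      _ = s / m := by simp [div_eq_mul_inv]
  exact (abs_localDisc_le_add_prod_sub_prod (fun j => (gridCorner_mem_Icc k j).1) hkt htl
    (hx k) (hx l)).trans (by gcongr)

lemma starDisc_le {x : Fin N → Fin s → ℝ} {c : ℝ}
    (hx : ∀ t : Fin s → ℝ, (∀ j, t j ∈ Set.Icc (0 : ℝ) 1) → |localDisc x t| ≤ c) :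
    starDisc x ≤ c := by
  refine csSup_le ⟨_, 0, by simp, rfl⟩ ?_
  rintro _ ⟨t, ht, rfl⟩
  exact hx t ht

lemma starDisc_nonneg (x : Fin N → Fin s → ℝ) : 0 ≤ starDisc x := by
  refine Real.sSup_nonneg ?_
  rintro _ ⟨t, -, rfl⟩
  exact abs_nonneg _

lemma minDisc_le_starDisc {x : Fin N → Fin s → ℝ} (hx : ∀ n j, x n j ∈ Set.Ico (0 : ℝ) 1) :
    minDisc N s ≤ starDisc x := by
  refine csInf_le ⟨0, ?_⟩ ⟨x, hx, rfl⟩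
  rintro _ ⟨y, -, rfl⟩
  exact starDisc_nonneg y

lemma exists_forall_abs_localDisc_le {T : Type*} [Fintype T] (hN : N ≠ 0) {c : T → Fin s → ℝ}
    (hc : ∀ i j, c i j ∈ Set.Icc (0 : ℝ) 1) {ε : ℝ} (hε : 0 ≤ ε)
    (hT : Fintype.card T * (2 * Real.exp (-(2 * N * ε ^ 2))) < 1) :
    ∃ x : Fin N → Fin s → ℝ, (∀ n j, x n j ∈ Set.Ico (0 : ℝ) 1) ∧
      ∀ i, |localDisc x (c i)| ≤ ε := by
  have hN' : (0 : ℝ) < N := by positivity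
  have hmeas (i : T) : MeasurableSet (Set.univ.pi fun j => Set.Iio (c i j)) :=
    .univ_pi fun _ => measurableSet_Iio
  have hexp : -(2 * (N * ε) ^ 2) / (Fintype.card (Fin N) * (1 - 0) ^ 2) = -(2 * N * ε ^ 2) := by
    rw [Fintype.card_fin]
    field_simp
    ring
  obtain ⟨x, hx, hdev⟩ := exists_forall_abs_sum_sub_integral_lt (ι := Fin N) (a := 0) (b := 1)
    (f := fun i => (Set.univ.pi fun j => Set.Iio (c i j)).indicator 1)
    (fun i => (measurable_one.indicator (hmeas i)).aemeasurable)
    (fun i => .of_forall fun y =>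
      ⟨Set.indicator_nonneg (fun _ _ => zero_le_one) y, Set.indicator_le_self' (by simp) y⟩)
    (ae_uniformCube_mem_Ico (ι := Fin s)) (mul_nonneg hN'.le hε) (by rwa [hexp])
  refine ⟨x, hx, fun i => ?_⟩
  have hi := hdev i
  rw [MeasureTheory.integral_indicator_one (hmeas i), uniformCube_real_pi_Iio (hc i)] at hi
  rw [localDisc_eq_sum_div hN, abs_div, Nat.abs_cast, div_le_iff₀' hN']
  exact hi.le

theorem minDisc_le_add_div (hN : N ≠ 0) (hm : 0 < m) {ε : ℝ} (hε : 0 ≤ ε)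
    (hmε : ((m : ℝ) + 1) ^ s * (2 * Real.exp (-(2 * N * ε ^ 2))) < 1) :
    minDisc N s ≤ ε + s / m := by
  obtain ⟨x, hx, hgrid⟩ := exists_forall_abs_localDisc_le hN
    (gridCorner_mem_Icc (s := s) (m := m)) hε (by simpa using hmε)
  exact (minDisc_le_starDisc hx).trans
    (starDisc_le fun t ht => abs_localDisc_le_of_forall_gridCorner hm hgrid ht)

end Discrepancy

lemma add_one_pow_mul_two_mul_exp_lt_one {M : ℝ} (hM : 2 ≤ M) {s : ℕ} (hs : s ≠ 0) :
    (M + 1) ^ s * (2 * Real.exp (-(8 * (s * Real.log M)))) < 1 := by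
  have hM_pos : 0 < M := by linarith
  have hlog : 0 < Real.log M := Real.log_pos (by linarith)
  have hcube : 2 * (M + 1) ≤ M ^ 3 := by nlinarith [pow_le_pow_left₀ zero_le_two hM 2]
  have hpow : 2 * (M + 1) ^ s ≤ Real.exp (3 * (s * Real.log M)) := by
    calc 2 * (M + 1) ^ s ≤ 2 ^ s * (M + 1) ^ s := by
          gcongr
          exact le_self_pow₀ one_le_two hs
      _ = (2 * (M + 1)) ^ s := (mul_pow _ _ _).symm
      _ ≤ (M ^ 3) ^ s := by gcongr
      _ = Real.exp (3 * (s * Real.log M)) := by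
          rw [← Real.exp_log (pow_pos hM_pos 3), ← Real.exp_nat_mul, Real.log_pow]
          ring_nf
  calc (M + 1) ^ s * (2 * Real.exp (-(8 * (s * Real.log M))))
      = 2 * (M + 1) ^ s * Real.exp (-(8 * (s * Real.log M))) := by ring
    _ ≤ Real.exp (3 * (s * Real.log M)) * Real.exp (-(8 * (s * Real.log M))) := by gcongr
    _ < 1 := by
        rw [← Real.exp_add, Real.exp_lt_one_iff]
        have : 0 < s * Real.log M := by positivity
        linarith

lemma one_div_le_sqrt_mul_log {s N : ℝ} (hs : 1 ≤ s) (hN : 2 ≤ N) :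
    1 / N ≤ Real.sqrt (s / N * Real.log (s * N)) := by
  have hsN : 2 ≤ s * N := by nlinarith
  have hlog : 1 - (s * N)⁻¹ ≤ Real.log (s * N) := Real.one_sub_inv_le_log_of_pos (by linarith)
  refine Real.le_sqrt_of_sq_le ?_
  calc (1 / N) ^ 2 ≤ (s * N - 1) / N ^ 2 := by
        rw [div_pow, one_pow]
        gcongr
        linarith
    _ = s / N * (1 - (s * N)⁻¹) := by field_simp
    _ ≤ s / N * Real.log (s * N) := by gcongr

/-- `disc(N,s) ≤ C √(s/N) √(log s + log N)` for an absolute constant `C`. -/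
theorem minDisc_le_sqrt_log :
    ∃ C : ℝ, 0 < C ∧ ∀ s N : ℕ, 1 ≤ s → 2 ≤ N →
      minDisc N s ≤ C * Real.sqrt ((s : ℝ) / N) * Real.sqrt (Real.log s + Real.log N) := by
  refine ⟨3, by norm_num, fun s N hs hN => ?_⟩
  have hs' : (1 : ℝ) ≤ s := by exact_mod_cast hs
  have hN' : (2 : ℝ) ≤ N := by exact_mod_cast hN
  have hsN : (2 : ℝ) ≤ s * N := by nlinarith
  have hlog : 0 ≤ Real.log (s * N) := Real.log_nonneg (by linarith)
  rw [← Real.log_mul (by positivity) (by positivity), mul_assoc, ← Real.sqrt_mul (by positivity)]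
  set R := Real.sqrt (s / N * Real.log (s * N)) with hR
  have hR_sq : 2 * N * (2 * R) ^ 2 = 8 * (s * Real.log (s * N)) := by
    rw [mul_pow, hR, Real.sq_sqrt (by positivity)]
    field_simp
    ring
  have hgrid : (((s * N : ℕ) : ℝ) + 1) ^ s * (2 * Real.exp (-(2 * N * (2 * R) ^ 2))) < 1 := by
    rw [hR_sq, Nat.cast_mul]
    exact add_one_pow_mul_two_mul_exp_lt_one hsN (by lia)
  calc minDisc N s ≤ 2 * R + s / (s * N : ℕ) :=
        minDisc_le_add_div (by lia) (by positivity) (by positivity) hgrid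
    _ = 2 * R + 1 / N := by
        push_cast
        field_simp
    _ ≤ 2 * R + R := by gcongr; exact one_div_le_sqrt_mul_log hs' hN'
    _ = 3 * R := by ring
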